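/- In the setting of Theorem 6 with Δ := δ√T · I_s for some δ > 0 (so that Ψ := (X₁ − ED₀)Y₁P₁⁻¹, Ξ := (X₁ − ED₀)G₂, the robust Lyapunov inequality holds, and the perturbed closed loop is x⁺ = Ψ x + Ξ Q(x) + E d with |d(t)| ≤ δ for all t ≥ 0 and ‖D₀‖₂ ≤ δ√T), let V(x) := xᵀP₁⁻¹x, 𝒳 := {x : ℓ(x) + g(x, δ) ≤ 0}, ℛ_γ := {x : V(x) ≤ γ} for an arbitrary γ > 0, and 𝒵 := ℛ_γ ∩ 𝒳ᶜ. If V(x) + ℓ(x) + g(x, δ) ≤ γ for all x ∈ 𝒵, then ℛ_γ is robustly positively invariant: for every x(0) ∈ ℛ_γ and every disturbance sequence with |d(t)| ≤ δ for all t, the solution satisfies x(t) ∈ ℛ_γ for all t ≥ 0. (Theorem 7: robustly positively invariant set.) -/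

import Mathlib

open Matrix Filter Topology

noncomputable def euclNorm {ι : Type*} [Fintype ι] (v : ι → ℝ) : ℝ :=
  Real.sqrt (∑ i, v i ^ 2)

noncomputable def spec2Norm {ι κ : Type*} [Fintype ι] [Fintype κ]
    (M : Matrix ι κ ℝ) : ℝ :=
  sSup ((fun v => euclNorm (M *ᵥ v)) '' {v | euclNorm v ≤ 1})

def LoewnerLE {ι : Type*} [Fintype ι] (X Y : Matrix ι ι ℝ) : Prop :=
  (Y - X).PosSemidef

def NegDef {ι : Type*} [Fintype ι] (M : Matrix ι ι ℝ) : Prop :=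
  (-M).PosDef

/-- The data-based bound `ℓ(x)` of inequality (34). -/
noncomputable def ellFun {n s s' p T : ℕ}
    (X₁ : Matrix (Fin n) (Fin T) ℝ) (E : Matrix (Fin n) (Fin s) ℝ)
    (Δ : Matrix (Fin s) (Fin s') ℝ) (P₁ Ω : Matrix (Fin n) (Fin n) ℝ)
    (G₁ : Matrix (Fin T) (Fin n) ℝ) (G₂ : Matrix (Fin T) (Fin p) ℝ)
    (Q : (Fin n → ℝ) → Fin p → ℝ) (x : Fin n → ℝ) : ℝ :=
  - (x ⬝ᵥ ((P₁⁻¹ * Ω * P₁⁻¹) *ᵥ x))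
  + (((2:ℝ) • ((X₁ * G₁) *ᵥ x) + (X₁ * G₂) *ᵥ Q x) ⬝ᵥ (P₁⁻¹ *ᵥ ((X₁ * G₂) *ᵥ Q x)))
  + spec2Norm Δ
      * euclNorm (((2:ℝ) • ((X₁ * G₁) *ᵥ x) + (X₁ * G₂) *ᵥ Q x) ᵥ* (P₁⁻¹ * E))
      * euclNorm (G₂ *ᵥ Q x)
  + spec2Norm Δ * euclNorm ((2:ℝ) • (G₁ *ᵥ x) + G₂ *ᵥ Q x)
      * euclNorm ((Eᵀ * P₁⁻¹ * X₁ * G₂) *ᵥ Q x)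
  + spec2Norm Δ ^ 2 * spec2Norm (Eᵀ * P₁⁻¹ * E)
      * euclNorm ((2:ℝ) • (G₁ *ᵥ x) + G₂ *ᵥ Q x) * euclNorm (G₂ *ᵥ Q x)

/-- The disturbance term `g(x, δ) = r₁(x)δ + r₂(x)δ + r₃δ²` of (35)-(36). -/
noncomputable def gFun {n s s' p T : ℕ}
    (X₁ : Matrix (Fin n) (Fin T) ℝ) (E : Matrix (Fin n) (Fin s) ℝ)
    (Δ : Matrix (Fin s) (Fin s') ℝ) (P₁ : Matrix (Fin n) (Fin n) ℝ)
    (G₁ : Matrix (Fin T) (Fin n) ℝ) (G₂ : Matrix (Fin T) (Fin p) ℝ)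
    (Q : (Fin n → ℝ) → Fin p → ℝ) (δ : ℝ) (x : Fin n → ℝ) : ℝ :=
  2 * euclNorm (((X₁ * G₁) *ᵥ x + (X₁ * G₂) *ᵥ Q x) ᵥ* (P₁⁻¹ * E)) * δ
  + 2 * spec2Norm Δ * spec2Norm (Eᵀ * P₁⁻¹ * E)
      * euclNorm (G₁ *ᵥ x + G₂ *ᵥ Q x) * δ
  + spec2Norm (Eᵀ * P₁⁻¹ * E) * δ ^ 2

theorem euclNorm_nonneg {ι : Type*} [Fintype ι] (v : ι → ℝ) : 0 ≤ euclNorm v :=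
  Real.sqrt_nonneg _

theorem euclNorm_sq {ι : Type*} [Fintype ι] (v : ι → ℝ) : euclNorm v ^ 2 = v ⬝ᵥ v := by
  rw [euclNorm, Real.sq_sqrt (Finset.sum_nonneg fun i _ => sq_nonneg _)]
  simp [dotProduct, sq]

theorem euclNorm_smul {ι : Type*} [Fintype ι] (c : ℝ) (v : ι → ℝ) :
    euclNorm (c • v) = |c| * euclNorm v := by
  simp only [euclNorm, Pi.smul_apply, smul_eq_mul, mul_pow]
  rw [← Finset.mul_sum, Real.sqrt_mul (sq_nonneg c), Real.sqrt_sq_eq_abs]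

theorem abs_dotProduct_le_euclNorm_mul {ι : Type*} [Fintype ι] (v w : ι → ℝ) :
    |v ⬝ᵥ w| ≤ euclNorm v * euclNorm w := by
  refine abs_le_of_sq_le_sq ?_ (mul_nonneg (euclNorm_nonneg v) (euclNorm_nonneg w))
  rw [mul_pow, euclNorm, euclNorm, Real.sq_sqrt (Finset.sum_nonneg fun i _ => sq_nonneg _),
    Real.sq_sqrt (Finset.sum_nonneg fun i _ => sq_nonneg _)]
  exact Finset.sum_mul_sq_le_sq_mul_sq _ _ _

theorem bddAbove_euclNorm_mulVec_image {ι κ : Type*} [Fintype ι] [Fintype κ]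
    (M : Matrix ι κ ℝ) :
    BddAbove ((fun v => euclNorm (M *ᵥ v)) '' {v | euclNorm v ≤ 1}) := by
  refine ⟨Real.sqrt (∑ i, ∑ j, M i j ^ 2), ?_⟩
  rintro _ ⟨v, hv, rfl⟩
  refine Real.sqrt_le_sqrt (Finset.sum_le_sum fun i _ => ?_)
  have hv' : ∑ j, v j ^ 2 ≤ 1 := by
    have h : euclNorm v ≤ 1 := hv
    rwa [euclNorm, Real.sqrt_le_one] at h
  calc (M *ᵥ v) i ^ 2 ≤ (∑ j, M i j ^ 2) * ∑ j, v j ^ 2 :=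
        Finset.sum_mul_sq_le_sq_mul_sq _ _ _
    _ ≤ ∑ j, M i j ^ 2 :=
        mul_le_of_le_one_right (Finset.sum_nonneg fun j _ => sq_nonneg _) hv'

theorem spec2Norm_nonneg {ι κ : Type*} [Fintype ι] [Fintype κ] (M : Matrix ι κ ℝ) :
    0 ≤ spec2Norm M := by
  refine Real.sSup_nonneg ?_
  rintro _ ⟨v, -, rfl⟩
  exact euclNorm_nonneg _

theorem euclNorm_mulVec_le {ι κ : Type*} [Fintype ι] [Fintype κ] (M : Matrix ι κ ℝ)
    (v : κ → ℝ) : euclNorm (M *ᵥ v) ≤ spec2Norm M * euclNorm v := by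
  rcases (euclNorm_nonneg v).eq_or_lt with h | h
  · have hv : v = 0 := by
      rw [← dotProduct_self_eq_zero, ← euclNorm_sq, ← h]
      simp
    simp [hv, euclNorm]
  · have hunit : euclNorm ((euclNorm v)⁻¹ • v) ≤ 1 := by
      rw [euclNorm_smul, abs_of_pos (inv_pos.2 h), inv_mul_cancel₀ h.ne']
    have hle : euclNorm (M *ᵥ ((euclNorm v)⁻¹ • v)) ≤ spec2Norm M :=
      le_csSup (bddAbove_euclNorm_mulVec_image M) ⟨_, hunit, rfl⟩
    rw [mulVec_smul, euclNorm_smul, abs_of_pos (inv_pos.2 h)] at hle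
    rwa [inv_mul_le_iff₀ h, mul_comm] at hle

theorem abs_dotProduct_mulVec_le {ι κ : Type*} [Fintype ι] [Fintype κ] (M : Matrix ι κ ℝ)
    (v : ι → ℝ) (w : κ → ℝ) :
    |v ⬝ᵥ (M *ᵥ w)| ≤ spec2Norm M * euclNorm v * euclNorm w := by
  refine (abs_dotProduct_le_euclNorm_mul _ _).trans ?_
  calc euclNorm v * euclNorm (M *ᵥ w) ≤ euclNorm v * (spec2Norm M * euclNorm w) :=
        mul_le_mul_of_nonneg_left (euclNorm_mulVec_le M w) (euclNorm_nonneg v)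
    _ = spec2Norm M * euclNorm v * euclNorm w := by ring

theorem euclNorm_transpose_mulVec_le {ι κ : Type*} [Fintype ι] [Fintype κ]
    (M : Matrix ι κ ℝ) (v : ι → ℝ) : euclNorm (Mᵀ *ᵥ v) ≤ spec2Norm M * euclNorm v := by
  rcases (euclNorm_nonneg (Mᵀ *ᵥ v)).eq_or_lt with h | h
  · rw [← h]
    exact mul_nonneg (spec2Norm_nonneg M) (euclNorm_nonneg v)
  · refine le_of_mul_le_mul_right ?_ h
    calc euclNorm (Mᵀ *ᵥ v) * euclNorm (Mᵀ *ᵥ v) = v ⬝ᵥ (M *ᵥ (Mᵀ *ᵥ v)) := by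
          rw [← sq, euclNorm_sq, dotProduct_mulVec v M, ← mulVec_transpose]
      _ ≤ spec2Norm M * euclNorm v * euclNorm (Mᵀ *ᵥ v) :=
          (le_abs_self _).trans (abs_dotProduct_mulVec_le M v _)

/-- A spectral norm bound on `D` gives the corresponding Loewner bound on `D * Dᵀ`. -/
theorem loewnerLE_mul_transpose_of_spec2Norm_le {ι κ : Type*} [Fintype ι] [Fintype κ]
    [DecidableEq ι] {D : Matrix ι κ ℝ} {c : ℝ} (hD : spec2Norm D ≤ c) :
    LoewnerLE (D * Dᵀ) ((c • (1 : Matrix ι ι ℝ)) * (c • (1 : Matrix ι ι ℝ))ᵀ) := by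
  refine PosSemidef.of_dotProduct_mulVec_nonneg ?_ fun y => ?_
  · simp [IsHermitian, conjTranspose_eq_transpose_of_trivial]
  · have h : euclNorm (Dᵀ *ᵥ y) ≤ c * euclNorm y :=
      (euclNorm_transpose_mulVec_le D y).trans
        (mul_le_mul_of_nonneg_right hD (euclNorm_nonneg y))
    have hsq := pow_le_pow_left₀ (euclNorm_nonneg _) h 2
    rw [mul_pow, euclNorm_sq, euclNorm_sq] at hsq
    have hDD : y ⬝ᵥ ((D * Dᵀ) *ᵥ y) = (Dᵀ *ᵥ y) ⬝ᵥ (Dᵀ *ᵥ y) := by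
      rw [← mulVec_mulVec, dotProduct_mulVec, ← mulVec_transpose]
    simp only [star_trivial, sub_mulVec, dotProduct_sub, hDD, transpose_smul, transpose_one,
      smul_mul_smul_comm, mul_one, smul_mulVec, one_mulVec, dotProduct_smul, smul_eq_mul]
    nlinarith

theorem euclNorm_mulVec_le_spec2Norm_smul_one {ι κ : Type*} [Fintype ι] [Fintype κ]
    [DecidableEq ι] {D : Matrix ι κ ℝ} {c : ℝ} (hc : 0 ≤ c) (hD : spec2Norm D ≤ c)
    (v : κ → ℝ) :
    euclNorm (D *ᵥ v) ≤ spec2Norm (c • (1 : Matrix ι ι ℝ)) * euclNorm v := by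
  rcases (euclNorm_nonneg (D *ᵥ v)).eq_or_lt with h | h
  · rw [← h]
    exact mul_nonneg (spec2Norm_nonneg _) (euclNorm_nonneg v)
  · have hle := euclNorm_mulVec_le (c • (1 : Matrix ι ι ℝ)) (D *ᵥ v)
    rw [smul_mulVec, one_mulVec, euclNorm_smul, abs_of_nonneg hc] at hle
    exact (euclNorm_mulVec_le D v).trans (mul_le_mul_of_nonneg_right
      (hD.trans (le_of_mul_le_mul_right hle h)) (euclNorm_nonneg v))

/-- Decrease of the linear part of the closed loop along `x ↦ xᵀ P⁻¹ x`. -/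
theorem dotProduct_inv_mulVec_le_of_negDef {n T : ℕ} {P Ω : Matrix (Fin n) (Fin n) ℝ}
    (hPsymm : P.IsSymm) (hP : P.PosDef) {Y : Matrix (Fin T) (Fin n) ℝ}
    {N : Matrix (Fin n) (Fin T) ℝ}
    (h : NegDef (Yᵀ * Nᵀ * P⁻¹ * (N * Y) - P + Ω)) (x : Fin n → ℝ) :
    ((N * (Y * P⁻¹)) *ᵥ x) ⬝ᵥ (P⁻¹ *ᵥ ((N * (Y * P⁻¹)) *ᵥ x)) ≤
      x ⬝ᵥ (P⁻¹ *ᵥ x) - x ⬝ᵥ ((P⁻¹ * Ω * P⁻¹) *ᵥ x) := by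
  have hinv : P⁻¹ᵀ = P⁻¹ := by rw [transpose_nonsing_inv, hPsymm.eq]
  have hdet : IsUnit P.det := hP.isUnit.map detMonoidHom
  have h0 := (PosDef.posSemidef h).dotProduct_mulVec_nonneg (P⁻¹ *ᵥ x)
  have key : (P⁻¹ *ᵥ x) ⬝ᵥ ((-(Yᵀ * Nᵀ * P⁻¹ * (N * Y) - P + Ω)) *ᵥ (P⁻¹ *ᵥ x)) =
      x ⬝ᵥ (P⁻¹ *ᵥ x) - x ⬝ᵥ ((P⁻¹ * Ω * P⁻¹) *ᵥ x) -
        ((N * (Y * P⁻¹)) *ᵥ x) ⬝ᵥ (P⁻¹ *ᵥ ((N * (Y * P⁻¹)) *ᵥ x)) := by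
    have hmove : ∀ {k : ℕ} (M : Matrix (Fin k) (Fin n) ℝ) (w : Fin k → ℝ),
        (M *ᵥ x) ⬝ᵥ w = x ⬝ᵥ (Mᵀ *ᵥ w) := fun M w => by
      rw [dotProduct_mulVec, vecMul_transpose]
    rw [hmove, hmove, hinv]
    simp only [mulVec_mulVec, ← dotProduct_sub, ← sub_mulVec]
    congr 2
    simp only [transpose_mul, hinv, neg_mul, mul_neg, mul_add, add_mul, mul_sub, sub_mul,
      Matrix.mul_assoc, mul_nonsing_inv P hdet, Matrix.mul_one]
    abel
  rw [star_trivial, key] at h0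
  linarith

/-- One-step bound of the quadratic form `xᵀ R x` along a perturbed closed loop, in terms of the
linear response `a`, the nonlinear response `b` and the disturbance `d`. -/
theorem quadratic_perturbed_step_le {n s T : ℕ} {R : Matrix (Fin n) (Fin n) ℝ} (hR : Rᵀ = R)
    (X : Matrix (Fin n) (Fin T) ℝ) (E : Matrix (Fin n) (Fin s) ℝ)
    {D : Matrix (Fin s) (Fin T) ℝ} {μ δ : ℝ}
    (hD : ∀ v, euclNorm (D *ᵥ v) ≤ μ * euclNorm v) (a b : Fin T → ℝ)
    {d : Fin s → ℝ} (hd : euclNorm d ≤ δ) :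
    ((X - E * D) *ᵥ a + (X - E * D) *ᵥ b + E *ᵥ d) ⬝ᵥ
        (R *ᵥ ((X - E * D) *ᵥ a + (X - E * D) *ᵥ b + E *ᵥ d)) ≤
      ((X - E * D) *ᵥ a) ⬝ᵥ (R *ᵥ ((X - E * D) *ᵥ a))
      + ((2:ℝ) • (X *ᵥ a) + X *ᵥ b) ⬝ᵥ (R *ᵥ (X *ᵥ b))
      + μ * euclNorm (((2:ℝ) • (X *ᵥ a) + X *ᵥ b) ᵥ* (R * E)) * euclNorm b
      + μ * euclNorm ((2:ℝ) • a + b) * euclNorm ((Eᵀ * R * X) *ᵥ b)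
      + μ ^ 2 * spec2Norm (Eᵀ * R * E) * euclNorm ((2:ℝ) • a + b) * euclNorm b
      + (2 * euclNorm ((X *ᵥ a + X *ᵥ b) ᵥ* (R * E)) * δ
        + 2 * μ * spec2Norm (Eᵀ * R * E) * euclNorm (a + b) * δ
        + spec2Norm (Eᵀ * R * E) * δ ^ 2) := by
  set K := spec2Norm (Eᵀ * R * E)
  have hK : 0 ≤ K := spec2Norm_nonneg _
  set w := (2:ℝ) • a + b with hw
  have hcross : ∀ (u : Fin n → ℝ) (v : Fin s → ℝ) (r : ℝ), euclNorm v ≤ r →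
      |(u ᵥ* (R * E)) ⬝ᵥ v| ≤ euclNorm (u ᵥ* (R * E)) * r := fun u v r hv =>
    (abs_dotProduct_le_euclNorm_mul _ _).trans
      (mul_le_mul_of_nonneg_left hv (euclNorm_nonneg _))
  have hquad : ∀ (u v : Fin s → ℝ) (q r : ℝ), euclNorm u ≤ q → euclNorm v ≤ r →
      |u ⬝ᵥ ((Eᵀ * R * E) *ᵥ v)| ≤ K * q * r := fun u v q r hu hv =>
    (abs_dotProduct_mulVec_le _ _ _).trans (mul_le_mul
      (mul_le_mul_of_nonneg_left hu hK) hv (euclNorm_nonneg _)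
      (mul_nonneg hK ((euclNorm_nonneg _).trans hu)))
  have h₂ := hcross ((2:ℝ) • (X *ᵥ a) + X *ᵥ b) (D *ᵥ b) _ (hD b)
  have h₃ : |(D *ᵥ w) ⬝ᵥ ((Eᵀ * R * X) *ᵥ b)| ≤
      μ * euclNorm w * euclNorm ((Eᵀ * R * X) *ᵥ b) :=
    (abs_dotProduct_le_euclNorm_mul _ _).trans
      (mul_le_mul_of_nonneg_right (hD w) (euclNorm_nonneg _))
  have h₄ := hquad (D *ᵥ w) (D *ᵥ b) _ _ (hD w) (hD b)
  have g₁ := hcross (X *ᵥ a + X *ᵥ b) d _ hd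
  have g₂ := hquad (D *ᵥ (a + b)) d _ _ (hD (a + b)) hd
  have g₃ := hquad d d _ _ hd hd
  have hsymm : ∀ u v : Fin n → ℝ, v ⬝ᵥ (R *ᵥ u) = u ⬝ᵥ (R *ᵥ v) := fun u v => by
    rw [dotProduct_mulVec, ← mulVec_transpose, hR, dotProduct_comm]
  have hvec : ∀ (u : Fin n → ℝ) (v : Fin s → ℝ),
      (u ᵥ* (R * E)) ⬝ᵥ v = u ⬝ᵥ (R *ᵥ (E *ᵥ v)) := fun u v => by
    rw [← dotProduct_mulVec, mulVec_mulVec]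
  have hE : ∀ (v : Fin s → ℝ) (u : Fin n → ℝ), v ⬝ᵥ (Eᵀ *ᵥ u) = (E *ᵥ v) ⬝ᵥ u := fun v u => by
    rw [dotProduct_mulVec, vecMul_transpose]
  have expand :
      ((X - E * D) *ᵥ a + (X - E * D) *ᵥ b + E *ᵥ d) ⬝ᵥ
        (R *ᵥ ((X - E * D) *ᵥ a + (X - E * D) *ᵥ b + E *ᵥ d)) =
      ((X - E * D) *ᵥ a) ⬝ᵥ (R *ᵥ ((X - E * D) *ᵥ a))
      + ((2:ℝ) • (X *ᵥ a) + X *ᵥ b) ⬝ᵥ (R *ᵥ (X *ᵥ b))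
      - (((2:ℝ) • (X *ᵥ a) + X *ᵥ b) ᵥ* (R * E)) ⬝ᵥ (D *ᵥ b)
      - (D *ᵥ w) ⬝ᵥ ((Eᵀ * R * X) *ᵥ b)
      + (D *ᵥ w) ⬝ᵥ ((Eᵀ * R * E) *ᵥ (D *ᵥ b))
      + 2 * (((X *ᵥ a + X *ᵥ b) ᵥ* (R * E)) ⬝ᵥ d)
      - 2 * ((D *ᵥ (a + b)) ⬝ᵥ ((Eᵀ * R * E) *ᵥ d))
      + d ⬝ᵥ ((Eᵀ * R * E) *ᵥ d) := by
    simp only [hvec, hw, ← mulVec_mulVec, hE, sub_mulVec, mulVec_add, mulVec_sub, mulVec_smul,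
      add_dotProduct, dotProduct_add, sub_dotProduct, dotProduct_sub, smul_dotProduct,
      smul_eq_mul]
    rw [hsymm (X *ᵥ a) (X *ᵥ b), hsymm (X *ᵥ a) (E *ᵥ d), hsymm (X *ᵥ b) (E *ᵥ d),
      hsymm (X *ᵥ a) (E *ᵥ D *ᵥ b), hsymm (E *ᵥ D *ᵥ a) (X *ᵥ b),
      hsymm (E *ᵥ D *ᵥ a) (E *ᵥ D *ᵥ b), hsymm (E *ᵥ D *ᵥ a) (E *ᵥ d),
      hsymm (E *ᵥ D *ᵥ b) (E *ᵥ d)]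
    ring
  rw [expand]
  rw [abs_le] at h₂ h₃ h₄ g₁ g₂ g₃
  linarith [h₂.1, h₃.1, h₄.2, g₁.2, g₂.1, g₃.2]

/-- Theorem 7 (robustly positively invariant set). -/
theorem robustly_positively_invariant_set
    {n m p s T : ℕ}
    (A : Matrix (Fin n) (Fin n ⊕ Fin p) ℝ) (B : Matrix (Fin n) (Fin m) ℝ)
    (E : Matrix (Fin n) (Fin s) ℝ)
    (Q : (Fin n → ℝ) → Fin p → ℝ)
    (U₀ : Matrix (Fin m) (Fin T) ℝ) (Z₀ : Matrix (Fin n ⊕ Fin p) (Fin T) ℝ)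
    (X₁ : Matrix (Fin n) (Fin T) ℝ) (D₀ : Matrix (Fin s) (Fin T) ℝ)
    (hdata : X₁ = A * Z₀ + B * U₀ + E * D₀)
    (δ : ℝ) (hδ : 0 < δ)
    (Δ : Matrix (Fin s) (Fin s) ℝ)
    (hΔ : Δ = (δ * Real.sqrt T) • (1 : Matrix (Fin s) (Fin s) ℝ))
    (hD₀norm : spec2Norm D₀ ≤ δ * Real.sqrt T)
    (P₁ : Matrix (Fin n) (Fin n) ℝ) (hP₁symm : P₁.IsSymm) (hP₁ : P₁.PosDef)
    (Ω : Matrix (Fin n) (Fin n) ℝ) (hΩsymm : Ω.IsSymm) (hΩ : Ω.PosDef)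
    (Y₁ : Matrix (Fin T) (Fin n) ℝ) (G₂ : Matrix (Fin T) (Fin p) ℝ)
    -- the robust Lyapunov inequality:
    (hrob : ∀ D : Matrix (Fin s) (Fin T) ℝ, LoewnerLE (D * Dᵀ) (Δ * Δᵀ) →
      NegDef (Y₁ᵀ * (X₁ - E * D)ᵀ * P₁⁻¹ * ((X₁ - E * D) * Y₁) - P₁ + Ω))
    (G₁ : Matrix (Fin T) (Fin n) ℝ) (hG₁ : G₁ = Y₁ * P₁⁻¹)
    (Ψ : Matrix (Fin n) (Fin n) ℝ) (hΨ : Ψ = (X₁ - E * D₀) * G₁)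
    (Ξ : Matrix (Fin n) (Fin p) ℝ) (hΞ : Ξ = (X₁ - E * D₀) * G₂)
    (V : (Fin n → ℝ) → ℝ) (hV : ∀ x, V x = x ⬝ᵥ (P₁⁻¹ *ᵥ x))
    (γ : ℝ) (hγ : 0 < γ)
    -- V(x) + ℓ(x) + g(x,δ) ≤ γ for all x ∈ 𝒵 = ℛ_γ ∩ 𝒳ᶜ:
    (hZ : ∀ x : Fin n → ℝ, V x ≤ γ →
      0 < ellFun X₁ E Δ P₁ Ω G₁ G₂ Q x + gFun X₁ E Δ P₁ G₁ G₂ Q δ x →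
      V x + ellFun X₁ E Δ P₁ Ω G₁ G₂ Q x + gFun X₁ E Δ P₁ G₁ G₂ Q δ x ≤ γ) :
    -- then ℛ_γ is robustly positively invariant:
    ∀ (x : ℕ → Fin n → ℝ) (d : ℕ → Fin s → ℝ),
      (∀ t, euclNorm (d t) ≤ δ) →
      (∀ t, x (t + 1) = Ψ *ᵥ x t + Ξ *ᵥ Q (x t) + E *ᵥ d t) →
      V (x 0) ≤ γ → ∀ t, V (x t) ≤ γ := by
  intro x d hd hx hx0 t
  induction t with
  | zero => exact hx0
  | succ t ih =>
    have hc : 0 ≤ δ * Real.sqrt T := mul_nonneg hδ.le (Real.sqrt_nonneg _)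
    have hinv : P₁⁻¹ᵀ = P₁⁻¹ := by rw [transpose_nonsing_inv, hP₁symm.eq]
    have hlin := dotProduct_inv_mulVec_le_of_negDef hP₁symm hP₁
      (hrob D₀ (hΔ ▸ loewnerLE_mul_transpose_of_spec2Norm_le hD₀norm)) (x t)
    have hD : ∀ v, euclNorm (D₀ *ᵥ v) ≤ spec2Norm Δ * euclNorm v := fun v =>
      hΔ ▸ euclNorm_mulVec_le_spec2Norm_smul_one hc hD₀norm v
    have hstep := quadratic_perturbed_step_le hinv X₁ E hD
      (G₁ *ᵥ x t) (G₂ *ᵥ Q (x t)) (hd t)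
    have hle : V (x (t + 1)) ≤ V (x t) + ellFun X₁ E Δ P₁ Ω G₁ G₂ Q (x t)
        + gFun X₁ E Δ P₁ G₁ G₂ Q δ (x t) := by
      rw [← hG₁] at hlin
      rw [hV, hV, hx, hΨ, hΞ, ellFun, gFun]
      simp only [mulVec_mulVec] at hstep hlin ⊢
      linarith
    by_cases hpos : 0 < ellFun X₁ E Δ P₁ Ω G₁ G₂ Q (x t) + gFun X₁ E Δ P₁ G₁ G₂ Q δ (x t)
    · exact hle.trans (hZ (x t) ih hpos)
    · linarith
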